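/- Let n ≥ 2. Every class [f] ∈ 𝒜̄ₙ(+) can be expressed uniquely, up to the order of the summands, as [f] = [f₁] + ⋯ + [f_r], where each fⱼ ∈ 𝒜_{kⱼ}(×, ÷) and (k₁, …, k_r) is a non-trivial partition of n (i.e., r ≥ 2, k₁ ≤ ⋯ ≤ k_r, and k₁ + ⋯ + k_r = n). -/

import Mathlib

/- Common framework: `K = ℝ(x₁,x₂,…)` is the field of rational functions over `ℝ` in
countably many variables (the fraction field of `MvPolynomial ℕ ℝ`), arithmetic
expressions, the permutation action, isomorphism, types, the `EndsWith` classification,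
multilinear forms and monicity, isomorphism classes and their counting. -/

open MvPolynomial

noncomputable section

abbrev P : Type := MvPolynomial ℕ ℝ
abbrev K : Type := FractionRing P

def toK : P →+* K := algebraMap P K

/-- The variable `xᵢ`, as an element of `K`. -/
def Xv (i : ℕ) : K := toK (X i)

/-- `Vars f` : the set of variables on which `f` depends, i.e. the variables occurring in a
representation of `f` as a quotient of two coprime polynomials. -/
def Vars (f : K) : Set ℕ :=
  {i | ∃ p q : P, q ≠ 0 ∧ IsRelPrime p q ∧ f = toK p / toK q ∧ (i ∈ p.vars ∨ i ∈ q.vars)}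

/-- `𝒜` : the smallest subset of `K` containing every variable and closed under the four
binary operations applied to expressions with disjoint variable sets. -/
inductive IsAE : K → Prop
  | var (i : ℕ) : IsAE (Xv i)
  | add {g h : K} : IsAE g → IsAE h → Disjoint (Vars g) (Vars h) → IsAE (g + h)
  | sub {g h : K} : IsAE g → IsAE h → Disjoint (Vars g) (Vars h) → IsAE (g - h)
  | mul {g h : K} : IsAE g → IsAE h → Disjoint (Vars g) (Vars h) → IsAE (g * h)
  | div {g h : K} : IsAE g → IsAE h → Disjoint (Vars g) (Vars h) → IsAE (g / h)

/-- The action `σ·f` of a permutation of the variables on `K`, substituting `σ(xᵢ)` for `xᵢ`. -/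
def permAct (σ : Equiv.Perm ℕ) : K ≃+* K :=
  IsFractionRing.ringEquivOfRingEquiv (renameEquiv ℝ σ).toRingEquiv

/-- `f ≅ g` : `f` and `g` are isomorphic, i.e. differ by a permutation of the variables. -/
def Iso (f g : K) : Prop := ∃ σ : Equiv.Perm ℕ, permAct σ f = g

/-- First type: `-f ∉ 𝒜`. -/
def FirstType (f : K) : Prop := IsAE f ∧ ¬ IsAE (-f)

/-- Second type: `-f ∈ 𝒜` but `f ≇ -f`. -/
def SecondType (f : K) : Prop := IsAE f ∧ IsAE (-f) ∧ ¬ Iso f (-f)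

/-- Third type: `-f ∈ 𝒜` and `f ≅ -f`. -/
def ThirdType (f : K) : Prop := IsAE f ∧ IsAE (-f) ∧ Iso f (-f)

/-- The four binary operators. -/
inductive Op : Type
  | add | sub | mul | div
deriving DecidableEq

/-- `EndsWith f o` : the arithmetic expression `f` ends with the operator `o`. -/
inductive EndsWith : K → Op → Prop
  | var (i : ℕ) : EndsWith (Xv i) Op.mul
  | add_base {i j : ℕ} (hij : i ≠ j) : EndsWith (Xv i + Xv j) Op.add
  | sub_base {i j : ℕ} (hij : i ≠ j) : EndsWith (Xv i - Xv j) Op.sub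
  | mul_base {i j : ℕ} (hij : i ≠ j) : EndsWith (Xv i * Xv j) Op.mul
  | div_base {i j : ℕ} (hij : i ≠ j) : EndsWith (Xv i / Xv j) Op.div
  | add_rec {g h : K} {o₁ o₂ : Op} : IsAE g → IsAE h → Disjoint (Vars g) (Vars h) →
      3 ≤ (Vars (g + h)).ncard → o₁ ≠ Op.sub → o₂ ≠ Op.sub →
      EndsWith g o₁ → EndsWith h o₂ → EndsWith (g + h) Op.add
  | mul_rec {g h : K} {o₁ o₂ : Op} : IsAE g → IsAE h → Disjoint (Vars g) (Vars h) →
      3 ≤ (Vars (g * h)).ncard → o₁ ≠ Op.div → o₂ ≠ Op.div →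
      EndsWith g o₁ → EndsWith h o₂ → EndsWith (g * h) Op.mul
  | div_rec {g h : K} {o₁ o₂ : Op} : IsAE g → IsAE h → Disjoint (Vars g) (Vars h) →
      3 ≤ (Vars (g / h)).ncard → o₁ ≠ Op.div → o₂ ≠ Op.div →
      EndsWith g o₁ → EndsWith h o₂ → EndsWith (g / h) Op.div
  | sub_rec {g h : K} {o₁ o₂ : Op} : IsAE g → IsAE h → Disjoint (Vars g) (Vars h) →
      3 ≤ (Vars (g - h)).ncard → o₁ ≠ Op.sub → o₂ ≠ Op.sub → FirstType h →
      EndsWith g o₁ → EndsWith h o₂ → EndsWith (g - h) Op.sub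

/-- `f` ends with one of the operators in `s`. -/
def EndsIn (f : K) (s : Set Op) : Prop := ∃ o ∈ s, EndsWith f o

/-- The binary operation on `K` corresponding to an operator. -/
def applyOp (o : Op) (a b : K) : K :=
  match o with
  | Op.add => a + b
  | Op.sub => a - b
  | Op.mul => a * b
  | Op.div => a / b

/-- The variable index set `{1, …, n}` (for the variables `x₁, …, xₙ`). -/
def varsUpTo (n : ℕ) : Set ℕ := {i | 1 ≤ i ∧ i ≤ n}

/-- `𝒜ₙ` : arithmetic expressions whose variable set is exactly `{x₁, …, xₙ}`. -/
def AEn (n : ℕ) : Set K := {f | IsAE f ∧ Vars f = varsUpTo n}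

/-- A multilinear polynomial: degree at most `1` in each variable. -/
def Multilinear (p : P) : Prop := ∀ i : ℕ, p.degreeOf i ≤ 1

/-- The key of a (multilinear) monomial: the sorted list of variables occurring in it;
keys are compared in the lexicographic order on lists. -/
def monKey (m : ℕ →₀ ℕ) : List ℕ := m.support.sort (· ≤ ·)

/-- A (multilinear) polynomial is monic if the coefficient of its lexicographically
leading (i.e. first) monomial is positive. -/
def MonicML (p : P) : Prop :=
  ∃ m ∈ p.support, 0 < p.coeff m ∧ ∀ m' ∈ p.support, monKey m ≤ monKey m'

/-- `MLForm f F₁ F₂` : `F₁ / F₂` is the multilinear form of `f`: `F₁, F₂` are coprime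
multilinear polynomials, `F₂` is monic, and `f = F₁ / F₂`. -/
def MLForm (f : K) (F₁ F₂ : P) : Prop :=
  Multilinear F₁ ∧ Multilinear F₂ ∧ IsRelPrime F₁ F₂ ∧ F₂ ≠ 0 ∧ MonicML F₂ ∧
    f = toK F₁ / toK F₂

/-- A monic arithmetic expression: the numerator of its multilinear form is monic as well. -/
def MonicAE (f : K) : Prop := ∃ F₁ F₂ : P, MLForm f F₁ F₂ ∧ MonicML F₁

/-- The isomorphism class of `f`. -/
def classOf (f : K) : Set K := {g | Iso f g}

/-- `S̄` : the set of isomorphism classes of elements of `S`. -/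
def classes (S : Set K) : Set (Set K) := classOf '' S

/-- `|S̄|` : the number of isomorphism classes of elements of `S`. -/
def countClasses (S : Set K) : ℕ := (classes S).ncard

/-- The number of isomorphism classes of elements of `S` depending on exactly `k` variables. -/
def gradeCount (S : Set K) (k : ℕ) : ℕ := countClasses {f ∈ S | (Vars f).ncard = k}

/-- `ω_n` for a graded family having `N k` elements in grade `k` : the sum over all
partitions `(k₁^{m₁},…,k_s^{m_s})` of `n` of `∏ⱼ C(N kⱼ + mⱼ - 1, mⱼ)`. -/
def omega (N : ℕ → ℕ) (n : ℕ) : ℕ :=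
  ∑ p : n.Partition,
    ∏ k ∈ p.parts.toFinset, Nat.choose (N k + p.parts.count k - 1) (p.parts.count k)

/-- `ω_n′` : the same sum restricted to non-trivial partitions, i.e. `ω_n - N n`. -/
def omega' (N : ℕ → ℕ) (n : ℕ) : ℕ := omega N n - N n

/-- `𝒜(s)` : arithmetic expressions ending with one of the operators in `s`. -/
def Aset (s : Set Op) : Set K := {f | IsAE f ∧ EndsIn f s}

/-- `ℱ(s)` : first-type arithmetic expressions ending with one of the operators in `s`. -/
def Fset (s : Set Op) : Set K := {f | FirstType f ∧ EndsIn f s}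

/-- `ℬ(s)` : second-type arithmetic expressions ending with one of the operators in `s`. -/
def Bset (s : Set Op) : Set K := {f | SecondType f ∧ EndsIn f s}

/-- `𝒞(s)` : third-type arithmetic expressions ending with one of the operators in `s`. -/
def Cset (s : Set Op) : Set K := {f | ThirdType f ∧ EndsIn f s}

/-- `ℳℬ(s)` : monic second-type arithmetic expressions ending with an operator in `s`. -/
def MBset (s : Set Op) : Set K := {f | SecondType f ∧ MonicAE f ∧ EndsIn f s}


/-- A representative-level decomposition of the class `[f]` as a sum `[f₁] + ⋯ + [f_r]`
(`r ≥ 2`) where each summand is in `𝒜(×,÷)`, the representatives have pairwise disjoint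
variable sets, and the sizes of their variable sets form a (non-trivial) partition of `n`. -/
def ClassSumDecomp (n : ℕ) (f : K) (s : Multiset K) : Prop :=
  2 ≤ Multiset.card s ∧
  (∀ g ∈ s, IsAE g ∧ EndsIn g {Op.mul, Op.div}) ∧
  s.Pairwise (fun a b => Disjoint (Vars a) (Vars b)) ∧
  Iso f s.sum ∧
  (s.map fun g => (Vars g).ncard).sum = n


/-! ### Partial derivatives on `K` -/

lemma toK_inj {p q : P} : toK p = toK q ↔ p = q :=
  (IsFractionRing.injective P K).eq_iff

lemma toK_ne_zero {p : P} (h : p ≠ 0) : toK p ≠ 0 := by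
  rw [← map_zero toK]; exact fun h' => h (toK_inj.1 h')

lemma exists_frac (f : K) : ∃ p q : P, q ≠ 0 ∧ IsRelPrime p q ∧ f = toK p / toK q := by
  obtain ⟨p, q, h, e⟩ := IsFractionRing.exists_reduced_fraction (A := P) f
  refine ⟨p, q, nonZeroDivisors.ne_zero q.2, h, ?_⟩
  rw [← e, IsFractionRing.mk'_eq_div]; rfl

/-- the ring hom `p ↦ p + ε ∂ᵢ p`. -/
def dualHom (i : ℕ) : P →+* TrivSqZeroExt K K where
  toFun p := TrivSqZeroExt.inl (toK p) + TrivSqZeroExt.inr (toK (pderiv i p))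
  map_one' := by ext <;> simp
  map_zero' := by ext <;> simp
  map_add' p q := by ext <;> simp
  map_mul' p q := by ext <;> simp [mul_comm]

lemma dualHom_unit (i : ℕ) (q : nonZeroDivisors P) : IsUnit (dualHom i q) := by
  rw [TrivSqZeroExt.isUnit_iff_isUnit_fst]
  simp only [dualHom, RingHom.coe_mk, MonoidHom.coe_mk, OneHom.coe_mk, TrivSqZeroExt.fst_add,
    TrivSqZeroExt.fst_inl, TrivSqZeroExt.fst_inr, add_zero]
  exact (toK_ne_zero (nonZeroDivisors.ne_zero q.2)).isUnit

def dualK (i : ℕ) : K →+* TrivSqZeroExt K K :=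
  IsLocalization.lift (M := nonZeroDivisors P) (dualHom_unit i)

lemma dualK_toK (i : ℕ) (p : P) : dualK i (toK p) = dualHom i p :=
  IsLocalization.lift_eq _ p

lemma dualK_fst (i : ℕ) (f : K) : (dualK i f).fst = f := by
  have : ((TrivSqZeroExt.fstHom K K K).toRingHom.comp (dualK i)) = RingHom.id K := by
    apply IsLocalization.ringHom_ext (nonZeroDivisors P)
    ext p
    · have := dualK_toK i (C p)
      simp only [RingHom.comp_apply]
      erw [this]; simp [dualHom]; rfl
    · have := dualK_toK i (X p)
      simp only [RingHom.comp_apply]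
      erw [this]; simp [dualHom]; rfl
  exact congrArg (fun g => g f) this

/-- partial derivative on `K`. -/
def D (i : ℕ) (f : K) : K := (dualK i f).snd

lemma D_toK (i : ℕ) (p : P) : D i (toK p) = toK (pderiv i p) := by
  simp [D, dualK_toK, dualHom]

lemma D_add (i : ℕ) (f g : K) : D i (f + g) = D i f + D i g := by simp [D]

lemma D_zero (i : ℕ) : D i 0 = 0 := by simp [D]

lemma D_neg (i : ℕ) (f : K) : D i (-f) = - D i f := by simp [D]

lemma D_sub (i : ℕ) (f g : K) : D i (f - g) = D i f - D i g := by simp [D]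

lemma D_mul (i : ℕ) (f g : K) : D i (f * g) = D i f * g + f * D i g := by
  simp [D, dualK_fst]; ring

lemma D_one (i : ℕ) : D i 1 = 0 := by simp [D]

lemma D_inv (i : ℕ) (f : K) (hf : f ≠ 0) : D i f⁻¹ = - D i f / f ^ 2 := by
  have h := D_mul i f f⁻¹
  rw [mul_inv_cancel₀ hf, D_one] at h
  field_simp at h ⊢
  linear_combination -h

lemma D_comm (i j : ℕ) (f : K) : D i (D j f) = D j (D i f) := by
  obtain ⟨p, q, hq, -, rfl⟩ := exists_frac f
  have hp : pderiv i (pderiv j p) = pderiv j (pderiv i p) := by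
    ext m; simp only [coeff_pderiv]
    by_cases h : i = j
    · subst h; rfl
    · have h' := Ne.symm h
      simp [h, h', add_right_comm]; ring
  have hq2 : pderiv i (pderiv j q) = pderiv j (pderiv i q) := by
    ext m; simp only [coeff_pderiv]
    by_cases h : i = j
    · subst h; rfl
    · have h' := Ne.symm h
      simp [h, h', add_right_comm]; ring
  have hq' := toK_ne_zero hq
  set f := toK p / toK q with hf
  have hfq : f * toK q = toK p := by rw [hf]; field_simp
  have e1 : D i (D j (f * toK q)) = D j (D i (f * toK q)) := by
    rw [hfq]; simp only [D_toK, hp]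
  simp only [D_mul, D_add, D_toK, hq2] at e1
  have : (D i (D j f) - D j (D i f)) * toK q = 0 := by linear_combination e1
  rcases mul_eq_zero.1 this with h | h
  · exact sub_eq_zero.1 h
  · exact absurd h hq'

lemma vars_pderiv_zero {i : ℕ} {p : P} (h : pderiv i p = 0) : i ∉ p.vars := by
  intro hi
  rw [mem_vars_iff_mem_support] at hi
  obtain ⟨d, hd, hid⟩ := hi
  have h2 := congrArg (coeff (d - Finsupp.single i 1)) h
  rw [coeff_pderiv] at h2
  have h3 : d - Finsupp.single i 1 + Finsupp.single i 1 = d := by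
    apply tsub_add_cancel_of_le
    rw [Finsupp.single_le_iff]
    have := Finsupp.mem_support_iff.1 hid; omega
  rw [h3, coeff_zero] at h2
  rcases mul_eq_zero.1 h2 with h2 | h2
  · exact (mem_support_iff.1 hd) h2
  · have : (0:ℝ) ≤ ((d - Finsupp.single i 1 : ℕ →₀ ℕ) i : ℝ) := Nat.cast_nonneg _
    linarith

lemma degreeOf_pderiv_lt {i : ℕ} {p : P} (h : pderiv i p ≠ 0) :
    (pderiv i p).degreeOf i < p.degreeOf i := by
  have key : ∀ m ∈ (pderiv i p).support, m i < p.degreeOf i := by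
    intro m hm
    rw [mem_support_iff, coeff_pderiv] at hm
    have h1 : m + Finsupp.single i 1 ∈ p.support := by
      rw [mem_support_iff]; exact left_ne_zero_of_mul hm
    have := monomial_le_degreeOf i h1
    simp at this; omega
  obtain ⟨m, hm⟩ := support_nonempty.2 h
  rw [degreeOf_lt_iff (lt_of_le_of_lt (Nat.zero_le _) (key m hm))]
  exact key

lemma pderiv_dvd {i : ℕ} {q : P} (hq : q ≠ 0) (h : q ∣ pderiv i q) : pderiv i q = 0 := by
  by_contra h0
  obtain ⟨r, hr⟩ := h
  have hr0 : r ≠ 0 := by rintro rfl; simp at hr; exact h0 hr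
  have := degreeOf_pderiv_lt h0
  have h2 := degreeOf_mul_eq (n := i) hq hr0
  rw [← hr] at h2; omega

lemma D_div_toK (i : ℕ) (p q : P) (hq : q ≠ 0) : D i (toK p / toK q) =
    toK (pderiv i p * q - p * pderiv i q) / toK q ^ 2 := by
  have hq' := toK_ne_zero hq
  rw [div_eq_mul_inv, D_mul, D_inv _ _ hq', D_toK, D_toK]
  simp only [map_sub, map_mul]
  field_simp; ring

lemma mem_Vars_of {i : ℕ} {p q : P} (hq : q ≠ 0) (hpq : IsRelPrime p q)
    (h : D i (toK p / toK q) = 0) : i ∉ p.vars ∧ i ∉ q.vars := by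
  rw [D_div_toK _ _ _ hq] at h
  have hq' := toK_ne_zero hq
  have h1 : pderiv i p * q - p * pderiv i q = 0 := by
    by_contra h0
    exact (div_ne_zero (toK_ne_zero h0) (pow_ne_zero 2 hq')) h
  have h2 : pderiv i q = 0 := by
    apply pderiv_dvd hq
    apply hpq.symm.dvd_of_dvd_mul_left
    exact ⟨pderiv i p, by linear_combination -h1⟩
  have h3 : pderiv i p = 0 := by
    rw [h2] at h1; simpa [hq] using h1
  exact ⟨vars_pderiv_zero h3, vars_pderiv_zero h2⟩

lemma mem_Vars {i : ℕ} {f : K} : i ∈ Vars f ↔ D i f ≠ 0 := by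
  constructor
  · rintro ⟨p, q, hq, hpq, rfl, h⟩ h0
    have := mem_Vars_of hq hpq h0
    tauto
  · intro h
    obtain ⟨p, q, hq, hpq, rfl⟩ := exists_frac f
    refine ⟨p, q, hq, hpq, rfl, ?_⟩
    by_contra hc
    push Not at hc
    apply h
    rw [D_div_toK _ _ _ hq, pderiv_eq_zero_of_notMem_vars hc.1,
      pderiv_eq_zero_of_notMem_vars hc.2]
    simp

lemma notMem_Vars {i : ℕ} {f : K} : i ∉ Vars f ↔ D i f = 0 := by
  rw [mem_Vars, not_not]

lemma D_Xv (i j : ℕ) : D i (Xv j) = if j = i then 1 else 0 := by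
  rw [Xv, D_toK]
  split_ifs with h
  · subst h; simp
  · simp [pderiv_X_of_ne h]

lemma Vars_Xv (i : ℕ) : Vars (Xv i) = {i} := by
  ext j; rw [mem_Vars, D_Xv]; simp [eq_comm]

lemma permAct_toK (σ : Equiv.Perm ℕ) (p : P) : permAct σ (toK p) = toK (rename σ p) := by
  unfold permAct toK
  rw [IsFractionRing.ringEquivOfRingEquiv_algebraMap]
  rfl

lemma D_perm (σ : Equiv.Perm ℕ) (i : ℕ) (f : K) :
    D (σ i) (permAct σ f) = permAct σ (D i f) := by
  obtain ⟨p, q, hq, -, rfl⟩ := exists_frac f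
  have hq2 : rename σ q ≠ 0 := by
    rw [Ne, ← map_zero (rename σ)]
    exact fun h => hq (rename_injective σ σ.injective h)
  rw [D_div_toK _ _ _ hq, map_div₀, map_div₀, map_pow, permAct_toK, permAct_toK, permAct_toK,
    D_div_toK _ _ _ hq2, pderiv_rename σ.injective, pderiv_rename σ.injective]
  simp

lemma Vars_perm (σ : Equiv.Perm ℕ) (f : K) : Vars (permAct σ f) = σ '' Vars f := by
  ext j
  obtain ⟨i, rfl⟩ := σ.surjective j
  rw [mem_Vars, D_perm, σ.injective.mem_set_image, mem_Vars]
  simp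

/-! ### Variables of compound expressions -/

lemma D_eq_zero_of_disj {f g : K} (h : Disjoint (Vars f) (Vars g)) {i : ℕ} (hi : i ∈ Vars f) :
    D i g = 0 := notMem_Vars.1 (Set.disjoint_left.1 h hi)

lemma D_eq_zero_of_disj' {f g : K} (h : Disjoint (Vars f) (Vars g)) {i : ℕ} (hi : i ∈ Vars g) :
    D i f = 0 := notMem_Vars.1 (Set.disjoint_right.1 h hi)

lemma Vars_add {f g : K} (h : Disjoint (Vars f) (Vars g)) :
    Vars (f + g) = Vars f ∪ Vars g := by
  ext i
  rw [Set.mem_union]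
  by_cases h1 : i ∈ Vars f
  · have h2 := D_eq_zero_of_disj h h1
    simp only [h1, true_or, iff_true]
    rw [mem_Vars] at h1 ⊢
    rwa [D_add, h2, add_zero]
  · simp only [h1, false_or]
    rw [notMem_Vars] at h1
    rw [mem_Vars, mem_Vars, D_add, h1, zero_add]

lemma Vars_neg (f : K) : Vars (-f) = Vars f := by
  ext i; simp [mem_Vars, D_neg]

lemma Vars_inv {f : K} (hf : f ≠ 0) : Vars (f⁻¹) = Vars f := by
  ext i; simp [mem_Vars, D_inv, hf]

lemma ne_zero_of_Vars {f : K} (h : (Vars f).Nonempty) : f ≠ 0 := by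
  rintro rfl
  obtain ⟨i, hi⟩ := h
  exact mem_Vars.1 hi (D_zero i)

lemma Vars_mul {f g : K} (h : Disjoint (Vars f) (Vars g)) (hf : f ≠ 0) (hg : g ≠ 0) :
    Vars (f * g) = Vars f ∪ Vars g := by
  ext i
  rw [Set.mem_union]
  by_cases h1 : i ∈ Vars f
  · have h2 := D_eq_zero_of_disj h h1
    simp only [h1, true_or, iff_true]
    rw [mem_Vars] at h1 ⊢
    rw [D_mul, h2, mul_zero, add_zero]
    exact mul_ne_zero h1 hg
  · simp only [h1, false_or]
    rw [notMem_Vars] at h1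
    rw [mem_Vars, mem_Vars, D_mul, h1, zero_mul, zero_add]
    simp [hf]

lemma IsAE.nonempty {f : K} (h : IsAE f) : (Vars f).Nonempty := by
  induction h with
  | var i => rw [Vars_Xv]; simp
  | add _ _ hd h1 h2 => rw [Vars_add hd]; exact h1.inl
  | @sub g h _ _ hd h1 h2 =>
    rw [sub_eq_add_neg, Vars_add (by rwa [Vars_neg])]; exact h1.inl
  | mul _ _ hd h1 h2 =>
    rw [Vars_mul hd (ne_zero_of_Vars h1) (ne_zero_of_Vars h2)]; exact h1.inl
  | div _ _ hd h1 h2 =>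
    rw [div_eq_mul_inv, Vars_mul (by rwa [Vars_inv (ne_zero_of_Vars h2)]) (ne_zero_of_Vars h1)
      (inv_ne_zero (ne_zero_of_Vars h2))]
    exact h1.inl

/-- `a` is a product of two nonconstant factors with disjoint variables. -/
def IsProd (a G H : K) : Prop :=
  a = G * H ∧ Disjoint (Vars G) (Vars H) ∧ (Vars G).Nonempty ∧ (Vars H).Nonempty

/-- a variable or a nontrivial product. -/
def Good (a : K) : Prop := (∃ i, a = Xv i) ∨ ∃ G H, IsProd a G H

lemma IsProd.of_AE_mul {g h : K} (hg : IsAE g) (hh : IsAE h) (hd : Disjoint (Vars g) (Vars h)) :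
    IsProd (g * h) g h := ⟨rfl, hd, hg.nonempty, hh.nonempty⟩

lemma IsProd.of_AE_div {g h : K} (hg : IsAE g) (hh : IsAE h) (hd : Disjoint (Vars g) (Vars h)) :
    IsProd (g / h) g h⁻¹ := by
  have e := Vars_inv (ne_zero_of_Vars hh.nonempty)
  exact ⟨div_eq_mul_inv _ _, by rwa [e], hg.nonempty, by rw [e]; exact hh.nonempty⟩

lemma disj_Xv {i j : ℕ} (h : i ≠ j) : Disjoint (Vars (Xv i)) (Vars (Xv j)) := by
  rw [Vars_Xv, Vars_Xv]; simpa using h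

lemma Good.of_endsIn {a : K} (h : EndsIn a {Op.mul, Op.div}) : Good a := by
  obtain ⟨o, ho, h⟩ := h
  simp only [Set.mem_insert_iff, Set.mem_singleton_iff] at ho
  cases h with
  | var i => exact Or.inl ⟨i, rfl⟩
  | add_base hij => simp at ho
  | sub_base hij => simp at ho
  | mul_base hij => exact Or.inr ⟨_, _, IsProd.of_AE_mul (.var _) (.var _) (disj_Xv hij)⟩
  | div_base hij => exact Or.inr ⟨_, _, IsProd.of_AE_div (.var _) (.var _) (disj_Xv hij)⟩
  | add_rec => simp at ho
  | sub_rec => simp at ho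
  | mul_rec h1 h2 h3 => exact Or.inr ⟨_, _, IsProd.of_AE_mul h1 h2 h3⟩
  | div_rec h1 h2 h3 => exact Or.inr ⟨_, _, IsProd.of_AE_div h1 h2 h3⟩

lemma IsProd.vars {a G H : K} (h : IsProd a G H) : Vars a = Vars G ∪ Vars H := by
  rw [h.1, Vars_mul h.2.1 (ne_zero_of_Vars h.2.2.1) (ne_zero_of_Vars h.2.2.2)]

lemma Good.nonempty {a : K} (h : Good a) : (Vars a).Nonempty := by
  rcases h with ⟨i, rfl⟩ | ⟨G, H, h⟩
  · rw [Vars_Xv]; simp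
  · rw [h.vars]; exact h.2.2.1.inl

lemma Good.perm {a : K} (h : Good a) (σ : Equiv.Perm ℕ) : Good (permAct σ a) := by
  rcases h with ⟨i, rfl⟩ | ⟨G, H, rfl, h1, h2, h3⟩
  · left; exact ⟨σ i, by rw [Xv, permAct_toK]; simp [Xv]⟩
  · right
    refine ⟨permAct σ G, permAct σ H, map_mul _ _ _, ?_, ?_, ?_⟩
    · rw [Vars_perm, Vars_perm]
      exact (Set.disjoint_image_iff σ.injective).2 h1
    · rw [Vars_perm]; exact h2.image _
    · rw [Vars_perm]; exact h3.image _

lemma IsProd.symm {a G H : K} (h : IsProd a G H) : IsProd a H G :=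
  ⟨by rw [h.1, mul_comm], h.2.1.symm, h.2.2.2, h.2.2.1⟩

lemma IsProd.D_left {a G H : K} (h : IsProd a G H) {i : ℕ} (hi : i ∈ Vars G) :
    D i a = D i G * H := by
  rw [h.1, D_mul, D_eq_zero_of_disj h.2.1 hi]; ring

lemma IsProd.D_right {a G H : K} (h : IsProd a G H) {i : ℕ} (hi : i ∈ Vars H) :
    D i a = G * D i H := by
  rw [h.1, D_mul, D_eq_zero_of_disj' h.2.1 hi]; ring

lemma IsProd.D_mixed {a G H : K} (h : IsProd a G H) {i j : ℕ} (hi : i ∈ Vars G)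
    (hj : j ∈ Vars H) : D j (D i a) = D i G * D j H := by
  rw [h.D_left hi, D_mul, D_comm, D_eq_zero_of_disj' h.2.1 hj, D_zero]; ring

lemma IsProd.mixed_ne {a G H : K} (h : IsProd a G H) {i j : ℕ} (hi : i ∈ Vars G)
    (hj : j ∈ Vars H) : D j (D i a) ≠ 0 := by
  rw [h.D_mixed hi hj]; exact mul_ne_zero (mem_Vars.1 hi) (mem_Vars.1 hj)

lemma IsProd.log {a G H : K} (h : IsProd a G H) {i j : ℕ} (hi : i ∈ Vars G)
    (hj : j ∈ Vars H) : a * D j (D i a) = D i a * D j a := by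
  rw [h.D_mixed hi hj, h.D_left hi, h.D_right hj]
  nth_rewrite 1 [h.1]; ring

lemma IsProd.eq_of_sep {a b G H G' H' : K} (ha : IsProd a G H) (hb : IsProd b G' H')
    (hD : ∀ i, D i a = D i b) {i j : ℕ} (hi : i ∈ Vars G) (hj : j ∈ Vars H)
    (hi' : i ∈ Vars G') (hj' : j ∈ Vars H') : a = b := by
  have e1 := ha.log hi hj
  have e2 := hb.log hi' hj'
  rw [← hD i, ← hD j] at e2
  exact mul_right_cancel₀ (ha.mixed_ne hi hj) (e1.trans e2.symm)

lemma IsProd.eq_aux {a b G H G' H' : K} (ha : IsProd a G H) (hb : IsProd b G' H')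
    (hD : ∀ i, D i a = D i b) (hV : Vars a = Vars b) {i : ℕ} (hi : i ∈ Vars G)
    (hi' : i ∈ Vars G') : a = b := by
  by_contra hne
  have hmem : ∀ k ∈ Vars a, k ∈ Vars G' ∨ k ∈ Vars H' := by
    intro k hk; rw [hV, hb.vars] at hk; exact hk
  have h1 : ∀ j ∈ Vars H, j ∈ Vars G' := by
    intro j hj
    rcases hmem j (by rw [ha.vars]; exact Or.inr hj) with h | h
    · exact h
    · exact absurd (ha.eq_of_sep hb hD hi hj hi' h) hne
  obtain ⟨j, hj⟩ := ha.2.2.2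
  have h2 : ∀ k ∈ Vars G, k ∈ Vars G' := by
    intro k hk
    rcases hmem k (by rw [ha.vars]; exact Or.inl hk) with h | h
    · exact h
    · exact absurd (ha.symm.eq_of_sep hb hD hj hk (h1 j hj) h) hne
  obtain ⟨k, hk⟩ := hb.2.2.2
  have hk2 : k ∈ Vars a := by rw [hV, hb.vars]; exact Or.inr hk
  rw [ha.vars] at hk2
  exact Set.disjoint_right.1 hb.2.1 hk (hk2.elim (h2 k) (h1 k))

lemma IsProd.not_single {a G H : K} (h : IsProd a G H) (i : ℕ) : Vars a ≠ {i} := by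
  intro e
  rw [h.vars] at e
  obtain ⟨x, hx⟩ := h.2.2.1
  obtain ⟨y, hy⟩ := h.2.2.2
  have h1 : x ∈ ({i} : Set ℕ) := e ▸ Or.inl hx
  have h2 : y ∈ ({i} : Set ℕ) := e ▸ Or.inr hy
  rw [Set.mem_singleton_iff] at h1 h2
  subst h1; subst h2
  exact Set.disjoint_left.1 h.2.1 hx hy

lemma Good.eq {a b : K} (ha : Good a) (hb : Good b) (hD : ∀ i, D i a = D i b) : a = b := by
  have hV : Vars a = Vars b := by ext i; rw [mem_Vars, mem_Vars, hD]
  rcases ha with ⟨i, rfl⟩ | ⟨G, H, ha⟩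
  · rcases hb with ⟨j, rfl⟩ | ⟨G', H', hb⟩
    · rw [Vars_Xv, Vars_Xv] at hV
      rw [Set.singleton_injective hV]
    · exact absurd (hV.symm.trans (Vars_Xv i)) (hb.not_single i)
  · rcases hb with ⟨j, rfl⟩ | ⟨G', H', hb⟩
    · exact absurd (hV.trans (Vars_Xv j)) (ha.not_single j)
    · obtain ⟨i, hi⟩ := ha.2.2.1
      have : i ∈ Vars b := by rw [← hV, ha.vars]; exact Or.inl hi
      rw [hb.vars] at this
      rcases this with h | h
      · exact ha.eq_aux hb hD hV hi h
      · exact ha.eq_aux hb.symm hD hV hi h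

/-! ### Sums -/

/-- A family of good summands with pairwise disjoint variables. -/
def GoodSum (s : Multiset K) : Prop :=
  (∀ a ∈ s, Good a) ∧ s.Pairwise (fun a b => Disjoint (Vars a) (Vars b))

lemma D_list_zero {l : List K} {i : ℕ} (h : ∀ b ∈ l, D i b = 0) : D i l.sum = 0 := by
  induction l with
  | nil => simp [D_zero]
  | cons b l ih =>
    rw [List.sum_cons, D_add, h b (by simp), ih (fun c hc => h c (by simp [hc])), add_zero]

lemma D_list_sum {l : List K} (hl : l.Pairwise (fun a b => Disjoint (Vars a) (Vars b)))
    {a : K} (ha : a ∈ l) {i : ℕ} (hi : i ∈ Vars a) : D i l.sum = D i a := by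
  induction l with
  | nil => simp at ha
  | cons b l ih =>
    rw [List.pairwise_cons] at hl
    rw [List.sum_cons, D_add]
    rcases List.mem_cons.1 ha with rfl | ha
    · rw [D_list_zero (fun c hc => D_eq_zero_of_disj (hl.1 c hc) hi), add_zero]
    · rw [ih hl.2 ha, D_eq_zero_of_disj' (hl.1 a ha) hi, zero_add]

lemma GoodSum.D_sum {s : Multiset K} (hs : GoodSum s) {a : K} (ha : a ∈ s) {i : ℕ}
    (hi : i ∈ Vars a) : D i s.sum = D i a := by
  obtain ⟨-, l, rfl, hl⟩ := hs
  rw [Multiset.sum_coe]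
  exact D_list_sum hl (by simpa using ha) hi

lemma GoodSum.exists_mem {s : Multiset K} (hs : GoodSum s) {i : ℕ} (hi : D i s.sum ≠ 0) :
    ∃ a ∈ s, i ∈ Vars a := by
  obtain ⟨-, l, rfl, hl⟩ := hs
  by_contra hc
  push Not at hc
  rw [Multiset.sum_coe] at hi
  exact hi (D_list_zero fun b hb => notMem_Vars.1 (hc b (by simpa using hb)))

lemma GoodSum.uniq {s : Multiset K} (hs : GoodSum s) {a b : K} (ha : a ∈ s) (hb : b ∈ s)
    {i : ℕ} (hi : i ∈ Vars a) (hi' : i ∈ Vars b) : a = b := by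
  by_contra hne
  haveI : Std.Symm (fun a b : K => Disjoint (Vars a) (Vars b)) := ⟨fun _ _ h => h.symm⟩
  exact Set.disjoint_left.1 (hs.2.forall ha hb hne) hi hi'

lemma GoodSum.nodup {s : Multiset K} (hs : GoodSum s) : s.Nodup := by
  obtain ⟨hg, l, rfl, hl⟩ := hs
  rw [Multiset.coe_nodup]
  refine List.Pairwise.imp_of_mem ?_ hl
  rintro a b ha hb hab rfl
  obtain ⟨i, hi⟩ := (hg a (by simpa using ha)).nonempty
  exact Set.disjoint_left.1 hab hi hi

lemma GoodSum.edge {t : Multiset K} (ht : GoodSum t) {b : K} (hb : b ∈ t) {i j : ℕ}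
    (hi : i ∈ Vars b) (h : D j (D i t.sum) ≠ 0) : j ∈ Vars b := by
  rw [ht.D_sum hb hi, D_comm] at h
  rw [mem_Vars]
  intro h0
  rw [h0, D_zero] at h
  exact h rfl

lemma GoodSum.edge_prod {s : Multiset K} (hs : GoodSum s) {a G H : K} (ha : a ∈ s)
    (h : IsProd a G H) {i j : ℕ} (hi : i ∈ Vars G) (hj : j ∈ Vars H) :
    D j (D i s.sum) ≠ 0 := by
  rw [hs.D_sum ha (by rw [h.vars]; exact Or.inl hi)]
  exact h.mixed_ne hi hj

lemma GoodSum.subset {s t : Multiset K} (hs : GoodSum s) (ht : GoodSum t)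
    (e : s.sum = t.sum) {a : K} (ha : a ∈ s) : ∃ b ∈ t, Vars a ⊆ Vars b := by
  have hex : ∀ i ∈ Vars a, ∃ b ∈ t, i ∈ Vars b := by
    intro i hi
    apply ht.exists_mem
    rw [← e, hs.D_sum ha hi]
    exact mem_Vars.1 hi
  rcases hs.1 a ha with ⟨i, rfl⟩ | ⟨G, H, h⟩
  · obtain ⟨b, hb, hib⟩ := hex i (by rw [Vars_Xv]; rfl)
    exact ⟨b, hb, by rw [Vars_Xv]; simpa using hib⟩
  · obtain ⟨i, hi⟩ := h.2.2.1
    obtain ⟨j, hj⟩ := h.2.2.2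
    obtain ⟨b, hb, hib⟩ := hex i (by rw [h.vars]; exact Or.inl hi)
    have h1 : ∀ k ∈ Vars H, k ∈ Vars b := fun k hk =>
      ht.edge hb hib (e ▸ hs.edge_prod ha h hi hk)
    have h2 : ∀ k ∈ Vars G, k ∈ Vars b := fun k hk =>
      ht.edge hb (h1 j hj) (e ▸ hs.edge_prod ha h.symm hj hk)
    refine ⟨b, hb, ?_⟩
    rw [h.vars]
    exact Set.union_subset h2 h1

lemma GoodSum.mem {s t : Multiset K} (hs : GoodSum s) (ht : GoodSum t)
    (e : s.sum = t.sum) {a : K} (ha : a ∈ s) : a ∈ t := by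
  obtain ⟨b, hb, hab⟩ := hs.subset ht e ha
  obtain ⟨a', ha', hba⟩ := ht.subset hs e.symm hb
  obtain ⟨i, hi⟩ := (hs.1 a ha).nonempty
  obtain rfl := hs.uniq ha ha' hi (hba (hab hi))
  have hV := Set.Subset.antisymm hab hba
  suffices a = b by rwa [this]
  refine (hs.1 a ha).eq (ht.1 b hb) fun k => ?_
  by_cases hk : k ∈ Vars a
  · rw [← hs.D_sum ha hk, ← ht.D_sum hb (hab hk), e]
  · rw [notMem_Vars.1 hk, notMem_Vars.1 (hV ▸ hk)]

lemma GoodSum.ext {s t : Multiset K} (hs : GoodSum s) (ht : GoodSum t)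
    (e : s.sum = t.sum) : s = t :=
  (Multiset.Nodup.ext hs.nodup ht.nodup).2 fun _ => ⟨hs.mem ht e, ht.mem hs e.symm⟩

lemma GoodSum.perm {s : Multiset K} (hs : GoodSum s) (σ : Equiv.Perm ℕ) :
    GoodSum (s.map (permAct σ)) := by
  obtain ⟨hg, l, rfl, hl⟩ := hs
  constructor
  · intro a ha
    obtain ⟨b, hb, rfl⟩ := Multiset.mem_map.1 ha
    exact (hg b hb).perm σ
  · refine ⟨l.map (permAct σ), by simp, ?_⟩
    rw [List.pairwise_map]
    refine hl.imp fun h => ?_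
    rw [Vars_perm, Vars_perm]
    exact (Set.disjoint_image_iff σ.injective).2 h

lemma ClassSumDecomp.good {n : ℕ} {f : K} {s : Multiset K} (h : ClassSumDecomp n f s) :
    GoodSum s :=
  ⟨fun a ha => Good.of_endsIn (h.2.1 a ha).2, h.2.2.1⟩

/-! ### Existence -/

/-- a decomposition of `f` itself into at least `m` summands. -/
def Dec (m : ℕ) (f : K) (s : Multiset K) : Prop :=
  m ≤ Multiset.card s ∧
  (∀ g ∈ s, IsAE g ∧ EndsIn g {Op.mul, Op.div}) ∧
  s.Pairwise (fun a b => Disjoint (Vars a) (Vars b)) ∧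
  f = s.sum ∧ (∀ g ∈ s, Vars g ⊆ Vars f) ∧
  ((Vars f).Finite → (s.map fun g => (Vars g).ncard).sum = (Vars f).ncard)

lemma Dec.single {f : K} (h : IsAE f) (he : EndsIn f {Op.mul, Op.div}) : Dec 1 f {f} := by
  refine ⟨by simp, ?_, ⟨[f], by simp, by simp⟩, by simp, by simp, by simp⟩
  intro g hg
  rw [Multiset.mem_singleton] at hg
  subst hg
  exact ⟨h, he⟩

lemma Dec.add {g h : K} {s t : Multiset K} (hs : Dec 1 g s) (ht : Dec 1 h t)
    (hd : Disjoint (Vars g) (Vars h)) : Dec 2 (g + h) (s + t) := by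
  obtain ⟨s1, s2, ⟨ls, rfl, hls⟩, s4, s5, s6⟩ := hs
  obtain ⟨t1, t2, ⟨lt, rfl, hlt⟩, t4, t5, t6⟩ := ht
  have hV := Vars_add hd
  refine ⟨?_, ?_, ⟨ls ++ lt, by simp, ?_⟩, ?_, ?_, ?_⟩
  · rw [Multiset.card_add]; omega
  · intro a ha
    exact (Multiset.mem_add.1 ha).elim (s2 a) (t2 a)
  · rw [List.pairwise_append]
    refine ⟨hls, hlt, fun a ha b hb => ?_⟩
    exact hd.mono (s5 a (by simpa using ha)) (t5 b (by simpa using hb))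
  · rw [Multiset.sum_add, ← s4, ← t4]
  · intro a ha
    rw [hV]
    rcases Multiset.mem_add.1 ha with h | h
    · exact (s5 a h).trans Set.subset_union_left
    · exact (t5 a h).trans Set.subset_union_right
  · intro hfin
    rw [hV] at hfin ⊢
    have f1 := hfin.subset Set.subset_union_left
    have f2 := hfin.subset Set.subset_union_right
    rw [Multiset.map_add, Multiset.sum_add, s6 f1, t6 f2, Set.ncard_union_eq hd f1 f2]

lemma Dec.one {f : K} {s : Multiset K} (h : Dec 2 f s) : Dec 1 f s :=
  ⟨by have := h.1; omega, h.2⟩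

lemma Dec.exists {f : K} {o : Op} (h : EndsWith f o) (hf : IsAE f) (ho : o ≠ Op.sub) :
    (∃ s, Dec 1 f s) ∧ (o = Op.add → ∃ s, Dec 2 f s) := by
  induction h with
  | var i => exact ⟨⟨_, Dec.single hf ⟨_, by simp, .var i⟩⟩, by simp⟩
  | add_base hij =>
    have := (Dec.single (.var _) ⟨_, by simp, .var _⟩).add
      (Dec.single (.var _) ⟨_, by simp, .var _⟩) (disj_Xv hij)
    exact ⟨⟨_, this.one⟩, fun _ => ⟨_, this⟩⟩
  | sub_base hij => exact absurd rfl ho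
  | mul_base hij => exact ⟨⟨_, Dec.single hf ⟨_, by simp, .mul_base hij⟩⟩, by simp⟩
  | div_base hij => exact ⟨⟨_, Dec.single hf ⟨_, by simp, .div_base hij⟩⟩, by simp⟩
  | add_rec h1 h2 h3 h4 h5 h6 h7 h8 ih1 ih2 =>
    obtain ⟨s, hs⟩ := (ih1 h1 h5).1
    obtain ⟨t, ht⟩ := (ih2 h2 h6).1
    have := hs.add ht h3
    exact ⟨⟨_, this.one⟩, fun _ => ⟨_, this⟩⟩
  | mul_rec h1 h2 h3 h4 h5 h6 h7 h8 =>
    exact ⟨⟨_, Dec.single hf ⟨_, by simp, .mul_rec h1 h2 h3 h4 h5 h6 h7 h8⟩⟩, by simp⟩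
  | div_rec h1 h2 h3 h4 h5 h6 h7 h8 =>
    exact ⟨⟨_, Dec.single hf ⟨_, by simp, .div_rec h1 h2 h3 h4 h5 h6 h7 h8⟩⟩, by simp⟩
  | sub_rec => exact absurd rfl ho

lemma varsUpTo_eq (n : ℕ) : varsUpTo n = (Finset.Icc 1 n : Finset ℕ) := by
  ext i; simp [varsUpTo]

lemma permAct_one (f : K) : permAct 1 f = f := by
  obtain ⟨p, q, -, -, rfl⟩ := exists_frac f
  rw [map_div₀, permAct_toK, permAct_toK]
  simp

lemma permAct_trans (σ τ : Equiv.Perm ℕ) (f : K) :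
    permAct (σ.trans τ) f = permAct τ (permAct σ f) := by
  obtain ⟨p, q, -, -, rfl⟩ := exists_frac f
  simp only [map_div₀, permAct_toK, rename_rename]
  rfl

lemma permAct_symm (σ : Equiv.Perm ℕ) (f : K) : permAct σ.symm (permAct σ f) = f := by
  rw [← permAct_trans, Equiv.self_trans_symm]
  exact permAct_one f

/-- For `n ≥ 2`, every class `[f] ∈ 𝒜̄ₙ(+)` can be expressed uniquely,
up to the order of the summands, as `[f] = [f₁] + ⋯ + [f_r]` with each
`fⱼ ∈ 𝒜_{kⱼ}(×,÷)` and `(k₁,…,k_r)` a non-trivial partition of `n`. -/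
theorem class_sum_decomposition (n : ℕ) (hn : 2 ≤ n) (f : K)
    (hf : f ∈ AEn n) (hadd : EndsWith f Op.add) :
    (∃ s : Multiset K, ClassSumDecomp n f s) ∧
    ∀ s t : Multiset K, ClassSumDecomp n f s → ClassSumDecomp n f t →
      Multiset.Rel Iso s t := by
  constructor
  · obtain ⟨s, h1, h2, h3, h4, -, h6⟩ := (Dec.exists hadd hf.1 (by simp)).2 rfl
    refine ⟨s, h1, h2, h3, ⟨1, by rw [permAct_one]; exact h4⟩, ?_⟩
    have hV : Vars f = (Finset.Icc 1 n : Finset ℕ) := hf.2.trans (varsUpTo_eq n)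
    rw [h6 (by rw [hV]; exact Finset.finite_toSet _), hV, Set.ncard_coe_finset]
    simp
  · intro s t hs ht
    obtain ⟨σ, hσ⟩ := hs.2.2.2.1
    obtain ⟨τ, hτ⟩ := ht.2.2.2.1
    have e : (s.map (permAct σ.symm)).map (permAct τ) = t := by
      refine ((hs.good.perm σ.symm).perm τ).ext ht.good ?_
      rw [← hτ, ← map_multiset_sum, ← map_multiset_sum, ← hσ, permAct_symm]
    rw [← e, Multiset.map_map, Multiset.rel_map_right]
    refine Multiset.rel_refl_of_refl_on fun a _ => ?_
    refine ⟨σ.symm.trans τ, ?_⟩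
    rw [permAct_trans]; rfl

end
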